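/- Let μ be any σ-invariant Borel probability measure on X. For every N ≥ 2, μ( ⋃_{i=0}^{h N − 1} σ^i(C N) ) > 1 − 1 / b^{N−1}, where C N = { x ∈ X : the block x_0 x_1 … x_{h N − 1} equals B N }. -/

import Mathlib

open MeasureTheory Filter Topology
open scoped ENNReal

/-- `m`-fold concatenation of a word. -/
def wordPow (w : List ℕ) (m : ℕ) : List ℕ := (List.replicate m w).flatten

/-- The words of the generalized del Junco–Rudolph construction:
`B 0 = [0]`, `B (k+1) = (B k)^(a·b^k) ++ [1] ++ (B k)^((b-a)·b^k)`. -/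
def Bword (b a : ℕ) : ℕ → List ℕ
  | 0 => [0]
  | k + 1 => wordPow (Bword b a k) (a * b ^ k) ++ [1] ++ wordPow (Bword b a k) ((b - a) * b ^ k)

/-- The height sequence: `h 0 = 1`, `h (k+1) = b^(k+1) * h k + 1`. -/
def hseq (b : ℕ) : ℕ → ℕ
  | 0 => 1
  | k + 1 => b ^ (k + 1) * hseq b k + 1

/-- The word `w` occurs in the word `v` at position `p` (0-based). -/
def OccursAt (w v : List ℕ) (p : ℕ) : Prop :=
  p + w.length ≤ v.length ∧ (v.drop p).take w.length = w

/-- The block of `x` of length `w.length` starting at index `m` equals the word `w`. -/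
def BlockEq (x : ℤ → ℕ) (m : ℤ) (w : List ℕ) : Prop :=
  ∀ i : ℕ, i < w.length → x (m + i) = w.getD i 0

/-- Membership in the subshift `X`: every finite block of `x` occurs as a consecutive
subword of some `B k`. -/
def InX (b a : ℕ) (x : ℤ → ℕ) : Prop :=
  ∀ (m : ℤ) (l : ℕ), ∃ k p, OccursAt (List.ofFn fun i : Fin l => x (m + (i : ℕ))) (Bword b a k) p

/-- The left shift `(σ x) n = x (n+1)` on `{0,1}^ℤ`. -/
def shiftMap (x : ℤ → ℕ) : ℤ → ℕ := fun n => x (n + 1)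

/-- The cylinder set `C N ⊆ X` of points whose block `x_0 … x_{h N - 1}` equals `B N`. -/
def Cset (b a N : ℕ) : Set (ℤ → ℕ) :=
  {x | InX b a x ∧ BlockEq x 0 (Bword b a N)}

/-!
Every word `B k` with `k ≥ N` is a concatenation of copies of `B N` in which consecutive copies are
separated by at most one spacer `1`: since `0 < a < b`, the spacer inserted at each stage stands
strictly inside `B (k+1)`, so spacers of different stages are never adjacent. Hence a point of `X`
that leaves the tower over `C N` enters it again after one step, and then stays there for at least
`h N` steps. The points of `X` outside the tower therefore do not return to this set before time
`h N + 1`, and an invariant probability measure gives it mass at most `1 / (h N + 1)`.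
-/

open scoped Computability

theorem mul_measure_le_of_ae_iterate_notMem {Ω : Type*} [MeasurableSpace Ω] {μ : Measure Ω}
    {f : Ω → Ω} (hf : MeasurePreserving f μ μ) {s : Set Ω} (hs : NullMeasurableSet s μ) {n : ℕ}
    (h : ∀ᵐ x ∂μ, x ∈ s → ∀ m ∈ Set.Ioo 0 n, f^[m] x ∉ s) : n * μ s ≤ μ Set.univ := by
  set s' := {x ∈ s | ∀ m ∈ Set.Ioo 0 n, f^[m] x ∉ s}
  have hss' : s' =ᵐ[μ] s := by
    refine eventuallyEq_set.2 ?_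
    filter_upwards [h] with x hx
    exact and_iff_left_of_imp hx
  by_contra! hlt
  rw [← measure_congr hss'] at hlt
  obtain ⟨x, hx, m, hm, hmx⟩ :=
    hf.exists_mem_iterate_mem_of_measure_univ_lt_mul_measure (hs.congr hss'.symm) hlt
  exact hx.2 m hm hmx.1

section SpacedConcat

variable {α : Type*}

/-- The concatenations of copies of `B`, each copy being preceded by at most one spacer `s`.
Being a Kleene star, this language makes refinement of block decompositions an inclusion. -/
def spacedConcat (s : α) (B : List α) : Language α :=
  ({B, s :: B} : Language α)∗

theorem self_mem_spacedConcat (s : α) (B : List α) : B ∈ spacedConcat s B :=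
  (le_kstar : ({B, s :: B} : Language α) ≤ _) (Or.inl rfl)

theorem cons_append_mem_spacedConcat {s : α} {B v : List α} (hv : v ∈ spacedConcat s B) :
    s :: (B ++ v) ∈ spacedConcat s B :=
  (mul_kstar_le_kstar : ({B, s :: B} : Language α) * _ ≤ _)
    (Language.append_mem_mul (a := s :: B) (Or.inr rfl) hv)

theorem spacedConcat_le_spacedConcat {s : α} {B B' : List α} (h : B' ∈ spacedConcat s B)
    (hs : s :: B' ∈ spacedConcat s B) : spacedConcat s B' ≤ spacedConcat s B := by
  have hle : ({B', s :: B'} : Language α) ≤ spacedConcat s B := by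
    rintro w (rfl | rfl)
    exacts [h, hs]
  exact (kstar_mono hle).trans_eq (kstar_idem _)

/-- The case `u.length = p + 1` is that of a spacer at position `p`. -/
theorem exists_append_of_mem_spacedConcat {s : α} {B v : List α} (hv : v ∈ spacedConcat s B)
    {p : ℕ} (hp : p < v.length) :
    ∃ u t, v = u ++ B ++ t ∧ u.length ≤ p + 1 ∧ p < u.length + B.length := by
  obtain ⟨L, rfl, hL⟩ := Language.mem_kstar.1 hv
  clear hv
  induction L generalizing p with
  | nil => simp at hp
  | cons c L ih =>
    rw [List.forall_mem_cons] at hL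
    obtain ⟨r, hr, hrc⟩ : ∃ r, r.length ≤ 1 ∧ c = r ++ B := by
      rcases hL.1 with rfl | rfl
      exacts [⟨[], by simp⟩, ⟨[s], by simp⟩]
    by_cases hpc : p < c.length
    · refine ⟨r, L.flatten, by simp [hrc], by lia, by simpa [hrc] using hpc⟩
    · rw [List.flatten_cons, List.length_append] at hp
      obtain ⟨u, t, hut, hu, hpu⟩ := ih hL.2 (p := p - c.length) (by lia)
      refine ⟨c ++ u, t, by simp [hut], ?_, ?_⟩ <;> rw [List.length_append] <;> lia

end SpacedConcat

theorem wordPow_append_singleton_append_wordPow_mem_spacedConcat (B : List ℕ) (s m : ℕ) {n : ℕ}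
    (hn : 0 < n) : wordPow B m ++ [s] ++ wordPow B n ∈ spacedConcat s B := by
  obtain ⟨n, rfl⟩ := Nat.exists_eq_add_one.2 hn
  refine Language.mem_kstar.2
    ⟨List.replicate m B ++ (s :: B) :: List.replicate n B, ?_, fun w hw ↦ ?_⟩
  · simp [wordPow, List.replicate_succ]
  · simp only [List.mem_append, List.mem_cons, List.mem_replicate] at hw
    rcases hw with ⟨-, rfl⟩ | rfl | ⟨-, rfl⟩
    exacts [Or.inl rfl, Or.inr rfl, Or.inl rfl]

theorem one_le_hseq (b : ℕ) : ∀ k, 1 ≤ hseq b k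
  | 0 => le_rfl
  | _ + 1 => Nat.le_add_left _ _

theorem pow_le_hseq (b k : ℕ) : b ^ k ≤ hseq b k := by
  cases k with
  | zero => simp [hseq]
  | succ k => exact (Nat.le_mul_of_pos_right _ (one_le_hseq b k)).trans (Nat.le_succ _)

theorem monotone_hseq {b : ℕ} (hb : 0 < b) : Monotone (hseq b) :=
  monotone_nat_of_le_succ fun _ ↦
    (Nat.le_mul_of_pos_left _ (Nat.pow_pos hb)).trans (Nat.le_succ _)

theorem length_Bword {b a : ℕ} (hab : a ≤ b) (k : ℕ) : (Bword b a k).length = hseq b k := by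
  induction k with
  | zero => rfl
  | succ k ih =>
    have hpow : a * b ^ k + (b - a) * b ^ k = b ^ (k + 1) := by
      rw [← add_mul, Nat.add_sub_cancel' hab, pow_succ']
    simp only [Bword, wordPow, hseq, List.length_append, List.length_flatten, List.map_replicate,
      List.sum_replicate, List.length_singleton, ih, ← hpow, smul_eq_mul]
    ring

theorem antitone_spacedConcat_Bword {b a : ℕ} (ha : 0 < a) (hab : a < b) :
    Antitone fun k ↦ spacedConcat 1 (Bword b a k) := by
  refine antitone_nat_of_succ_le fun k ↦ ?_
  have hpow : 0 < b ^ k := Nat.pow_pos (ha.trans hab)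
  have hmem (m : ℕ) : wordPow (Bword b a k) m ++ [1] ++ wordPow (Bword b a k) ((b - a) * b ^ k) ∈
      spacedConcat 1 (Bword b a k) :=
    wordPow_append_singleton_append_wordPow_mem_spacedConcat _ _ _
      (Nat.mul_pos (Nat.sub_pos_of_lt hab) hpow)
  refine spacedConcat_le_spacedConcat (hmem _) ?_
  obtain ⟨m, hm⟩ := Nat.exists_eq_add_one.2 (Nat.mul_pos ha hpow)
  rw [Bword, hm]
  simpa [wordPow, List.replicate_succ] using cons_append_mem_spacedConcat (hmem m)

theorem Bword_mem_spacedConcat {b a : ℕ} (ha : 0 < a) (hab : a < b) {N k : ℕ} (hNk : N ≤ k) :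
    Bword b a k ∈ spacedConcat 1 (Bword b a N) :=
  antitone_spacedConcat_Bword ha hab hNk (self_mem_spacedConcat _ _)

theorem iterate_shiftMap (i : ℕ) (x : ℤ → ℕ) : shiftMap^[i] x = fun n ↦ x (n + i) := by
  induction i generalizing x with
  | zero => simp
  | succ i ih =>
    funext n
    rw [Function.iterate_succ_apply, ih]
    simp only [shiftMap, Nat.cast_succ, add_assoc]

theorem blockEq_comp_add_iff {x : ℤ → ℕ} {c m : ℤ} {w : List ℕ} :
    BlockEq (fun n ↦ x (n + c)) m w ↔ BlockEq x (m + c) w := by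
  simp only [BlockEq, add_right_comm]

theorem measurableSet_blockEq (m : ℤ) (w : List ℕ) : MeasurableSet {x | BlockEq x m w} := by
  simp only [BlockEq, Set.ofPred_forall]
  exact MeasurableSet.iInter fun i ↦ MeasurableSet.iInter fun _ ↦
    measurableSet_eq_fun (measurable_pi_apply _) measurable_const

theorem OccursAt.blockEq {x : ℤ → ℕ} {m : ℤ} {l p : ℕ} {u w t : List ℕ}
    (h : OccursAt (List.ofFn fun i : Fin l ↦ x (m + (i : ℕ))) (u ++ w ++ t) p)
    (hpu : p ≤ u.length) (hul : u.length + w.length ≤ p + l) :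
    BlockEq x (m + (u.length - p)) w := by
  intro i hi
  have hlt : u.length - p + i < l := by lia
  have hget := congrArg (fun v ↦ v[u.length - p + i]?) h.2
  simp only [List.length_ofFn, List.getElem?_take_of_lt hlt, List.getElem?_drop,
    show p + (u.length - p + i) = u.length + i by lia, List.append_assoc,
    List.getElem?_append_right (Nat.le_add_right _ i), Nat.add_sub_cancel_left,
    List.getElem?_append_left hi, List.getElem?_ofFn, dif_pos hlt] at hget
  rw [List.getD_eq_getElem?_getD, hget, Option.getD_some]
  congr 1
  lia

theorem InX.comp_add {b a : ℕ} {x : ℤ → ℕ} (hx : InX b a x) (c : ℤ) :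
    InX b a fun n ↦ x (n + c) := by
  intro m l
  simpa only [add_right_comm] using hx (m + c) l

theorem InX.exists_blockEq {b a : ℕ} (ha : 0 < a) (hab : a < b) {x : ℤ → ℕ} (hx : InX b a x)
    (N : ℕ) : ∃ m : ℤ, -hseq b N < m ∧ m ≤ 1 ∧ BlockEq x m (Bword b a N) := by
  set H := hseq b N
  obtain ⟨k, p, hocc⟩ := hx (-H) (2 * H + 1)
  have hlen : p + (2 * H + 1) ≤ hseq b k := by
    simpa only [List.length_ofFn, length_Bword hab.le] using hocc.1
  have hNk : N ≤ k := ((monotone_hseq (ha.trans hab)).reflect_lt (show H < hseq b k by lia)).le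
  -- Position `p + H` of `B k` corresponds to the coordinate `0` of `x`.
  obtain ⟨u, t, hut, hu, hpu⟩ := exists_append_of_mem_spacedConcat
    (Bword_mem_spacedConcat ha hab hNk) (p := p + H) (by rw [length_Bword hab.le]; lia)
  rw [length_Bword hab.le] at hpu
  rw [hut] at hocc
  refine ⟨-H + (u.length - p), by lia, by lia, hocc.blockEq (by lia) ?_⟩
  rw [length_Bword hab.le]
  lia

/-- The tower `⋃_{i < h N} σ^i (C N)` of height `h N` over the cylinder `C N`. -/
def tower (b a N : ℕ) : Set (ℤ → ℕ) :=
  ⋃ i ∈ Finset.range (hseq b N), shiftMap^[i] '' Cset b a N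

theorem mem_tower_iff {b a N : ℕ} {x : ℤ → ℕ} :
    x ∈ tower b a N ↔ InX b a x ∧ ∃ i < hseq b N, BlockEq x (-i) (Bword b a N) := by
  simp only [tower, Set.mem_iUnion, Finset.mem_range, exists_prop, Set.mem_image]
  constructor
  · rintro ⟨i, hi, y, ⟨hyX, hyB⟩, rfl⟩
    rw [iterate_shiftMap]
    exact ⟨hyX.comp_add i, i, hi, blockEq_comp_add_iff.2 (by rwa [neg_add_cancel])⟩
  · rintro ⟨hX, i, hi, hB⟩
    refine ⟨i, hi, fun n ↦ x (n + -i), ⟨hX.comp_add _, ?_⟩, ?_⟩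
    · rwa [blockEq_comp_add_iff, zero_add]
    · simp [iterate_shiftMap]

theorem iterate_shiftMap_mem_tower {b a N : ℕ} (ha : 0 < a) (hab : a < b) {x : ℤ → ℕ}
    (hx : InX b a x) (hxN : x ∉ tower b a N) {n : ℕ} (hn : 0 < n) (hnN : n ≤ hseq b N) :
    shiftMap^[n] x ∈ tower b a N := by
  obtain ⟨m, hm, hm1, hB⟩ := hx.exists_blockEq ha hab N
  obtain rfl : m = 1 := by
    by_contra hne
    refine hxN (mem_tower_iff.2 ⟨hx, m.natAbs, by lia, ?_⟩)
    rwa [Int.ofNat_natAbs_of_nonpos (by lia), neg_neg]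
  rw [iterate_shiftMap, mem_tower_iff]
  refine ⟨hx.comp_add n, n - 1, by lia, blockEq_comp_add_iff.2 ?_⟩
  convert hB using 1
  lia

theorem nullMeasurableSet_tower {b a : ℕ} {μ : Measure (ℤ → ℕ)} (hμ : ∀ᵐ x ∂μ, InX b a x)
    (N : ℕ) : NullMeasurableSet (tower b a N) μ := by
  have hmeas : MeasurableSet
      (⋃ i ∈ Finset.range (hseq b N), {x | BlockEq x (-(i : ℤ)) (Bword b a N)}) :=
    Finset.measurableSet_biUnion _ fun i _ ↦ measurableSet_blockEq _ _
  refine hmeas.nullMeasurableSet.congr (eventuallyEq_set.2 ?_)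
  filter_upwards [hμ] with x hx
  simp [mem_tower_iff, hx]

theorem mul_measure_compl_tower_le {b a : ℕ} (ha : 0 < a) (hab : a < b) {μ : Measure (ℤ → ℕ)}
    (hμ : ∀ᵐ x ∂μ, InX b a x) (hinv : MeasurePreserving shiftMap μ μ) (N : ℕ) :
    (hseq b N + 1 : ℕ) * μ (tower b a N)ᶜ ≤ μ Set.univ := by
  refine mul_measure_le_of_ae_iterate_notMem hinv (nullMeasurableSet_tower hμ N).compl ?_
  filter_upwards [hμ] with x hx hxN m hm
  exact Set.notMem_compl_iff.2
    (iterate_shiftMap_mem_tower ha hab hx hxN hm.1 (Nat.lt_succ_iff.1 hm.2))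

theorem one_sub_one_div_pow_lt_one_sub_inv_hseq {b M N : ℕ} (hb : 0 < b) (hMN : M ≤ N) :
    1 - 1 / (b : ℝ≥0∞) ^ M < 1 - ((hseq b N + 1 : ℕ) : ℝ≥0∞)⁻¹ := by
  have hlt : b ^ M < hseq b N + 1 :=
    Nat.lt_succ_of_le ((Nat.pow_le_pow_right hb hMN).trans (pow_le_hseq b N))
  have hle : 1 / (b : ℝ≥0∞) ^ M ≤ 1 := by
    rw [one_div, ENNReal.inv_le_one]
    exact_mod_cast Nat.one_le_pow _ _ hb
  refine (ENNReal.cancel_of_ne (by finiteness)).tsub_lt_tsub_left_of_le hle ?_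
  rw [one_div, ENNReal.inv_lt_inv]
  exact_mod_cast hlt

theorem measure_tower_large_general {b a : ℕ} (ha : 0 < a) (hab : a < b) (μ : Measure (ℤ → ℕ))
    [IsProbabilityMeasure μ] (hμ : ∀ᵐ x ∂μ, InX b a x) (hinv : MeasurePreserving shiftMap μ μ)
    (N : ℕ) :
    1 - ((hseq b N + 1 : ℕ) : ℝ≥0∞)⁻¹ ≤
      μ (⋃ i ∈ Finset.range (hseq b N), shiftMap^[i] '' Cset b a N) := by
  have hcompl : μ (tower b a N)ᶜ ≤ ((hseq b N + 1 : ℕ) : ℝ≥0∞)⁻¹ := by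
    rw [ENNReal.le_inv_iff_mul_le, mul_comm]
    exact (mul_measure_compl_tower_le ha hab hμ hinv N).trans_eq measure_univ
  calc 1 - ((hseq b N + 1 : ℕ) : ℝ≥0∞)⁻¹ ≤ 1 - μ (tower b a N)ᶜ := tsub_le_tsub_left hcompl 1
    _ = μ (tower b a N) := by
      rw [← prob_compl_eq_one_sub₀ (nullMeasurableSet_tower hμ N).compl, compl_compl]

/-- for any invariant Borel probability measure `μ` on `X` and `N ≥ 2`, the
tower `⋃_{i<h N} σ^i (C N)` has measure greater than `1 - 1 / b^(N-1)`. -/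
theorem measure_tower_large (b a : ℕ) (hb : 2 ≤ b) (ha1 : 1 ≤ a) (ha2 : a ≤ b - 1)
    (μ : Measure (ℤ → ℕ)) (hprob : IsProbabilityMeasure μ)
    (hsupp : μ {y | InX b a y}ᶜ = 0) (hinv : MeasurePreserving shiftMap μ μ)
    (N : ℕ) (hN : 2 ≤ N) :
    μ (⋃ i ∈ Finset.range (hseq b N), shiftMap^[i] '' Cset b a N) >
      1 - 1 / (b : ℝ≥0∞) ^ (N - 1) := by
  exact (one_sub_one_div_pow_lt_one_sub_inv_hseq (by lia) (N.sub_le 1)).trans_le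
    (measure_tower_large_general ha1 (by lia) μ hsupp hinv N)
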